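/- Basis dual to monomials: define G_{k,γ} = (-1)^k ∂^k u_γ / [k]_q! where u_γ = g₁/∫_γ g₁ and g₁(x) = e_{q²}(-x²) ₀φ₁(-; q³; q², -q³x²). Then μ_{r,γ}(G_{k,γ}) = δ_{r,k}, consequently ∫_γ G_{k,γ}(x) x^l d_qx = q^{-(k²+k)/2} δ_{k,l}, and G_{k,γ} *_γ G_{l,γ} = [k+l choose l]_q G_{k+l,γ}. -/

import Mathlib

open scoped BigOperators

noncomputable section

/-- finite q-Pochhammer symbol `(a;q)_k` -/
def qPoch (q a : ℝ) (k : ℕ) : ℝ := ∏ j ∈ Finset.range k, (1 - a * q ^ j)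

/-- infinite q-Pochhammer symbol `(a;q)_∞` -/
def qPochInf (q a : ℝ) : ℝ := ∏' j : ℕ, (1 - a * q ^ j)

/-- q-integral over the lattice `L(γ) = {± q^k γ}` -/
def qInt (q γ : ℝ) (f : ℝ → ℝ) : ℝ :=
  (1 - q) * ∑' k : ℤ, (q ^ k * γ) * (f (q ^ k * γ) + f (-(q ^ k * γ)))

/-- k-th q-moment -/
def qMoment (q γ : ℝ) (e : ℕ) (f : ℝ → ℝ) : ℝ :=
  q ^ (e * (e + 1) / 2) * qInt q γ (fun x => f x * x ^ e)

/-- k-th strict q-moment -/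
def qNu (q γ : ℝ) (e : ℕ) (f : ℝ → ℝ) : ℝ :=
  q ^ (e * (e + 1) / 2) * qInt q γ (fun x => |f x * x ^ e|)

/-- q-derivative -/
def qDeriv (q : ℝ) (f : ℝ → ℝ) : ℝ → ℝ := fun x => (f x - f (q * x)) / ((1 - q) * x)

/-- q-factorial `[e]_q!` -/
def qFact (q : ℝ) (e : ℕ) : ℝ := qPoch q q e / (1 - q) ^ e

/-- q-binomial coefficient -/
def qBinom (q : ℝ) (n k : ℕ) : ℝ := qPoch q q n / (qPoch q q k * qPoch q q (n - k))

/-- q-convolution -/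
def qConv (q γ : ℝ) (f g : ℝ → ℝ) : ℝ → ℝ :=
  fun x => ∑' e : ℕ, (-1) ^ e * qMoment q γ e f / qFact q e * (qDeriv q)^[e] g x

/-- the q-Gaussian `e_{q²}(-x²)` -/
def qGauss (q : ℝ) : ℝ → ℝ := fun x => 1 / qPochInf (q ^ 2) (-(x ^ 2))

/-- discrete q-Hermite II polynomials -/
def qHermiteII (q : ℝ) (k : ℕ) (x : ℝ) : ℝ :=
  qPoch q q k * ∑ l ∈ Finset.range (k / 2 + 1),
    (-1) ^ l * q ^ (2 * l ^ 2 + l) / q ^ (2 * l * k) * x ^ (k - 2 * l) /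
      (qPoch (q ^ 2) (q ^ 2) l * qPoch q q (k - 2 * l))

/-- discrete delta function on the lattice, supported at `η γ q^p` -/
def qdelta (q γ η : ℝ) (p : ℤ) : ℝ → ℝ := fun x => if x = η * γ * q ^ p then 1 else 0

/-- `g₁(x) = e_{q²}(-x²) ₀φ₁(-; q³; q², -q³x²)` -/
def gOne (q : ℝ) : ℝ → ℝ := fun x =>
  qGauss q x * ∑' r : ℕ, (-1) ^ r * q ^ (2 * r ^ 2 + r) * x ^ (2 * r) /
    (qPoch (q ^ 2) (q ^ 3) r * qPoch (q ^ 2) (q ^ 2) r)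

/-- `u_γ = g₁ / ∫_γ g₁` -/
def uGamma (q γ : ℝ) : ℝ → ℝ := fun x => gOne q x / qInt q γ (gOne q)

/-- `G_{k,γ} = (-1)^k ∂^k u_γ / [k]_q!` -/
def Gk (q γ : ℝ) (k : ℕ) : ℝ → ℝ :=
  fun x => (-1) ^ k * (qDeriv q)^[k] (uGamma q γ) x / qFact q k

section Gaussian

variable {q : ℝ}

lemma multipliable_qPochInf (hq : q ∈ Set.Ioo (0 : ℝ) 1) (a : ℝ) :
    Multipliable fun j : ℕ => 1 - a * q ^ j := by
  have h : Summable fun j : ℕ => -a * q ^ j :=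
    (summable_geometric_of_lt_one hq.1.le hq.2).mul_left _
  refine (Real.multipliable_one_add_of_summable h).congr fun j => ?_
  ring

lemma qPochInf_eq_mul (hq : q ∈ Set.Ioo (0 : ℝ) 1) (a : ℝ) :
    qPochInf q a = (1 - a) * qPochInf q (a * q) := by
  have h : ∀ j : ℕ, 1 - a * q ^ (j + 1) = 1 - a * q * q ^ j := fun j => by ring
  unfold qPochInf
  rw [tprod_eq_zero_mul' (by simpa only [h] using multipliable_qPochInf hq (a * q))]
  simp only [h, pow_zero, mul_one]

lemma one_le_qPochInf (hq : q ∈ Set.Ioo (0 : ℝ) 1) {a : ℝ} (ha : a ≤ 0) :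
    1 ≤ qPochInf q a := by
  refine ge_of_tendsto' (multipliable_qPochInf hq a).hasProd.tendsto_prod_nat fun n => ?_
  refine Finset.prod_induction _ (1 ≤ ·) (fun _ _ => one_le_mul_of_one_le_of_one_le) le_rfl
    fun j _ => ?_
  have := mul_nonneg (neg_nonneg.2 ha) (pow_nonneg hq.1.le j)
  linarith

lemma sq_mem_Ioo (hq : q ∈ Set.Ioo (0 : ℝ) 1) : q ^ 2 ∈ Set.Ioo (0 : ℝ) 1 :=
  ⟨pow_pos hq.1 2, pow_lt_one₀ hq.1.le hq.2 two_ne_zero⟩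

lemma one_le_qPochInf_sq (hq : q ∈ Set.Ioo (0 : ℝ) 1) (x : ℝ) :
    1 ≤ qPochInf (q ^ 2) (-(x ^ 2)) :=
  one_le_qPochInf (sq_mem_Ioo hq) (neg_nonpos.2 (sq_nonneg x))

lemma qPochInf_sq_eq_mul (hq : q ∈ Set.Ioo (0 : ℝ) 1) (x : ℝ) :
    qPochInf (q ^ 2) (-(x ^ 2)) = (1 + x ^ 2) * qPochInf (q ^ 2) (-((q * x) ^ 2)) := by
  rw [qPochInf_eq_mul (sq_mem_Ioo hq)]
  congr 2 <;> ring

lemma pow_le_qPochInf_sq (hq : q ∈ Set.Ioo (0 : ℝ) 1) (n : ℕ) (x : ℝ) :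
    q ^ (n * (n - 1)) * x ^ (2 * n) ≤ qPochInf (q ^ 2) (-(x ^ 2)) := by
  induction n generalizing x with
  | zero => simpa using one_le_qPochInf_sq hq x
  | succ n ih =>
    rw [qPochInf_sq_eq_mul hq]
    have h1 := one_le_qPochInf_sq hq (q * x)
    have hexp : (n + 1) * (n + 1 - 1) = n * (n - 1) + 2 * n := by
      cases n with
      | zero => rfl
      | succ n => simp only [Nat.add_sub_cancel]; ring
    calc q ^ ((n + 1) * (n + 1 - 1)) * x ^ (2 * (n + 1))
        = x ^ 2 * (q ^ (n * (n - 1)) * (q * x) ^ (2 * n)) := by rw [hexp]; ring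
      _ ≤ x ^ 2 * qPochInf (q ^ 2) (-((q * x) ^ 2)) :=
          mul_le_mul_of_nonneg_left (ih _) (sq_nonneg x)
      _ ≤ _ := by nlinarith

lemma qGauss_pos (hq : q ∈ Set.Ioo (0 : ℝ) 1) (x : ℝ) : 0 < qGauss q x :=
  one_div_pos.2 (one_pos.trans_le (one_le_qPochInf_sq hq x))

lemma qGauss_le_one (hq : q ∈ Set.Ioo (0 : ℝ) 1) (x : ℝ) : qGauss q x ≤ 1 :=
  (div_le_one (one_pos.trans_le (one_le_qPochInf_sq hq x))).2 (one_le_qPochInf_sq hq x)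

lemma qGauss_neg (x : ℝ) : qGauss q (-x) = qGauss q x := by
  simp only [qGauss, neg_sq]

lemma qGauss_mul (hq : q ∈ Set.Ioo (0 : ℝ) 1) (x : ℝ) :
    qGauss q (q * x) = (1 + x ^ 2) * qGauss q x := by
  have h1 := one_le_qPochInf_sq hq (q * x)
  have h2 : 0 < 1 + x ^ 2 := by positivity
  simp only [qGauss]
  rw [qPochInf_sq_eq_mul hq x]
  field_simp

lemma pow_mul_qGauss_le (hq : q ∈ Set.Ioo (0 : ℝ) 1) (n : ℕ) (x : ℝ) :
    x ^ (2 * n) * qGauss q x ≤ (q ^ (n * (n - 1)))⁻¹ := by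
  have h0 := one_le_qPochInf_sq hq x
  have h1 : 0 < q ^ (n * (n - 1)) := pow_pos hq.1 _
  rw [qGauss, mul_one_div, div_le_iff₀ (by linarith), inv_mul_eq_div, le_div_iff₀ h1, mul_comm]
  exact pow_le_qPochInf_sq hq n x

end Gaussian

section QInt

variable {q γ : ℝ}

/-- Absolute convergence of the series defining `qInt`. -/
def QIntegrable (q γ : ℝ) (f : ℝ → ℝ) : Prop :=
  Summable fun k : ℤ => (q ^ k * γ) * (f (q ^ k * γ) + f (-(q ^ k * γ)))

lemma qInt_congr (hq : q ∈ Set.Ioo (0 : ℝ) 1) (hγ : γ ∈ Set.Ioo (0 : ℝ) 1) {f g : ℝ → ℝ}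
    (h : ∀ x, x ≠ 0 → f x = g x) : qInt q γ f = qInt q γ g := by
  have hy : ∀ k : ℤ, q ^ k * γ ≠ 0 := fun k => (mul_pos (zpow_pos hq.1 k) hγ.1).ne'
  simp only [qInt]
  congr 2
  funext k
  rw [h _ (hy k), h _ (neg_ne_zero.2 (hy k))]

lemma QIntegrable.const_mul {f : ℝ → ℝ} (c : ℝ) (hf : QIntegrable q γ f) :
    QIntegrable q γ fun x => c * f x :=
  (Summable.mul_left c hf).congr fun k => by ring

lemma qInt_const_mul (c : ℝ) (f : ℝ → ℝ) :
    qInt q γ (fun x => c * f x) = c * qInt q γ f := by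
  simp only [qInt]
  rw [mul_left_comm c, ← tsum_mul_left (a := c)]
  congr 2
  funext k
  ring

lemma QIntegrable.sub {f g : ℝ → ℝ} (hf : QIntegrable q γ f) (hg : QIntegrable q γ g) :
    QIntegrable q γ fun x => f x - g x :=
  (Summable.sub hf hg).congr fun k => by ring

lemma qInt_sub {f g : ℝ → ℝ} (hf : QIntegrable q γ f) (hg : QIntegrable q γ g) :
    qInt q γ (fun x => f x - g x) = qInt q γ f - qInt q γ g := by
  simp only [qInt]
  rw [← mul_sub, ← Summable.tsum_sub hf hg]
  congr 2
  funext k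
  ring

lemma lattice_succ (hq : q ∈ Set.Ioo (0 : ℝ) 1) (k : ℤ) :
    q ^ (k + 1) * γ = q * (q ^ k * γ) := by
  rw [zpow_add_one₀ hq.1.ne']
  ring

lemma QIntegrable.comp_mul (hq : q ∈ Set.Ioo (0 : ℝ) 1) {f : ℝ → ℝ}
    (hf : QIntegrable q γ f) : QIntegrable q γ fun x => f (q * x) := by
  have h := Summable.mul_left q⁻¹ ((Equiv.addRight (1 : ℤ)).summable_iff.2 hf)
  refine h.congr fun k => ?_
  have := hq.1.ne'
  simp only [Function.comp, Equiv.coe_addRight, lattice_succ hq, mul_neg]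
  field_simp

lemma qInt_comp_mul (hq : q ∈ Set.Ioo (0 : ℝ) 1) (f : ℝ → ℝ) :
    qInt q γ (fun x => f (q * x)) = q⁻¹ * qInt q γ f := by
  simp only [qInt]
  rw [mul_left_comm q⁻¹, ← tsum_mul_left (a := q⁻¹),
    ← (Equiv.addRight (1 : ℤ)).tsum_eq fun k : ℤ =>
      q⁻¹ * (q ^ k * γ * (f (q ^ k * γ) + f (-(q ^ k * γ))))]
  congr 2
  funext k
  have := hq.1.ne'
  simp only [Equiv.coe_addRight, lattice_succ hq, mul_neg]
  field_simp

lemma qInt_eq_zero_of_odd {f : ℝ → ℝ} (hf : ∀ x, f (-x) = -f x) : qInt q γ f = 0 := by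
  simp [qInt, hf]

lemma summable_lattice (hq : q ∈ Set.Ioo (0 : ℝ) 1) (hγ : γ ∈ Set.Ioo (0 : ℝ) 1)
    {φ : ℝ → ℝ} {C D : ℝ} (h0 : ∀ y, 0 < y → |φ y| ≤ C * y)
    (h1 : ∀ y, 0 < y → y * |φ y| ≤ D) : Summable fun k : ℤ => φ (q ^ k * γ) := by
  have hg := summable_geometric_of_lt_one hq.1.le hq.2
  have hy : ∀ k : ℤ, 0 < q ^ k * γ := fun k => mul_pos (zpow_pos hq.1 k) hγ.1
  refine Summable.of_nat_of_neg ?_ ?_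
  · refine Summable.of_norm_bounded (hg.mul_left (C * γ)) fun n => ?_
    refine (h0 _ (hy n)).trans (le_of_eq ?_)
    rw [zpow_natCast]
    ring
  · refine Summable.of_norm_bounded (hg.mul_left (D / γ)) fun n => ?_
    have h := h1 _ (hy (-n))
    rw [mul_comm, ← le_div_iff₀ (hy _)] at h
    refine h.trans (le_of_eq ?_)
    rw [zpow_neg, zpow_natCast]
    have := hγ.1.ne'
    have := pow_pos hq.1 n
    field_simp

end QInt

section Decay

open Filter Topology

variable {q γ : ℝ}

/-- A function that near `0` is an analytic multiple of the `q`-Gaussian and that decays faster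
than every power. -/
structure QSchwartz (q : ℝ) (f : ℝ → ℝ) : Prop where
  near_zero : ∃ F : ℝ → ℝ, AnalyticAt ℝ F 0 ∧ ∀ᶠ x in 𝓝[≠] 0, f x = qGauss q x * F x
  decay : ∀ m : ℕ, ∃ C, ∀ x, x ≠ 0 → |x| ^ m * |f x| ≤ C

lemma exists_bound_of_near_zero (hq : q ∈ Set.Ioo (0 : ℝ) 1) {f : ℝ → ℝ}
    (h : ∃ F : ℝ → ℝ, AnalyticAt ℝ F 0 ∧ ∀ᶠ x in 𝓝[≠] 0, f x = qGauss q x * F x)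
    (hd : ∃ C, ∀ x, x ≠ 0 → |x| * |f x| ≤ C) : ∃ C, ∀ x, x ≠ 0 → |f x| ≤ C := by
  obtain ⟨F, hF, hfF⟩ := h
  obtain ⟨C, hC⟩ := hd
  have hb : ∀ᶠ x in 𝓝 (0 : ℝ), |F x| < |F 0| + 1 :=
    hF.continuousAt.abs.eventually_lt_const (lt_add_one _)
  obtain ⟨δ, hδ, hball⟩ := Metric.mem_nhdsWithin_iff.1
    (hfF.and (hb.filter_mono nhdsWithin_le_nhds))
  refine ⟨max (|F 0| + 1) (C / δ), fun x hx => ?_⟩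
  rcases lt_or_ge |x| δ with hxδ | hxδ
  · obtain ⟨h1, h2⟩ := hball (a := x) ⟨by simpa using hxδ, hx⟩
    rw [h1, abs_mul, abs_of_pos (qGauss_pos hq x)]
    refine le_trans ?_ (le_max_left _ _)
    nlinarith [qGauss_le_one hq x, abs_nonneg (F x)]
  · refine le_trans ?_ (le_max_right _ _)
    rw [le_div_iff₀ hδ]
    nlinarith [hC x hx, abs_nonneg (f x)]

lemma QSchwartz.const_mul {f : ℝ → ℝ} (hf : QSchwartz q f) (c : ℝ) :
    QSchwartz q fun x => c * f x := by
  refine ⟨?_, fun m => ?_⟩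
  · obtain ⟨F, hF, h⟩ := hf.near_zero
    refine ⟨fun x => c * F x, analyticAt_const.mul hF, h.mono fun x hx => ?_⟩
    simp only [hx]
    ring
  · obtain ⟨C, hC⟩ := hf.decay m
    refine ⟨|c| * C, fun x hx => ?_⟩
    rw [abs_mul, mul_left_comm]
    exact mul_le_mul_of_nonneg_left (hC x hx) (abs_nonneg c)

lemma QSchwartz.near_zero_qDeriv (hq : q ∈ Set.Ioo (0 : ℝ) 1) {f : ℝ → ℝ}
    (hf : QSchwartz q f) : ∃ F : ℝ → ℝ, AnalyticAt ℝ F 0 ∧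
      ∀ᶠ x in 𝓝[≠] 0, qDeriv q f x = qGauss q x * F x := by
  obtain ⟨F, hF, h⟩ := hf.near_zero
  have hmul : Tendsto (fun x => q * x) (𝓝[≠] 0) (𝓝[≠] 0) := by
    refine tendsto_nhdsWithin_iff.2 ⟨?_, ?_⟩
    · have : Tendsto (fun x : ℝ => q * x) (𝓝 0) (𝓝 (q * 0)) :=
        (continuous_const.mul continuous_id).tendsto 0
      rw [mul_zero] at this
      exact this.mono_left nhdsWithin_le_nhds
    · filter_upwards [self_mem_nhdsWithin] with x hx
      exact mul_ne_zero hq.1.ne' hx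
  set H : ℝ → ℝ := fun x => F x - (1 + x ^ 2) * F (q * x) with hH
  have hHan : AnalyticAt ℝ H 0 := by
    have h1 : AnalyticAt ℝ (fun x => F (q * x)) 0 := by
      refine AnalyticAt.fun_comp (f := fun x => q * x) (by simpa using hF) ?_
      exact analyticAt_const.mul analyticAt_id
    exact hF.sub ((analyticAt_const.add (analyticAt_id.pow 2)).mul h1)
  obtain ⟨p, hp⟩ := hHan
  refine ⟨fun x => (1 - q)⁻¹ * dslope H 0 x,
    analyticAt_const.mul ⟨_, hp.has_fpower_series_dslope_fslope⟩, ?_⟩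
  filter_upwards [h, hmul.eventually h, self_mem_nhdsWithin] with x h1 h2 hx
  have hx : x ≠ 0 := hx
  have h1q : 1 - q ≠ 0 := (sub_pos.2 hq.2).ne'
  rw [dslope_of_ne _ hx, slope_def_field]
  have hH0 : H 0 = 0 := by simp [hH]
  rw [hH0, qDeriv, h1, h2, qGauss_mul hq]
  simp only [hH]
  field_simp
  ring

lemma QSchwartz.qDeriv (hq : q ∈ Set.Ioo (0 : ℝ) 1) {f : ℝ → ℝ} (hf : QSchwartz q f) :
    QSchwartz q (qDeriv q f) := by
  have hdec : ∀ m : ℕ, ∃ C, ∀ x, x ≠ 0 → |x| ^ (m + 1) * |_root_.qDeriv q f x| ≤ C := by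
    intro m
    obtain ⟨C, hC⟩ := hf.decay m
    have h1q : 0 < 1 - q := sub_pos.2 hq.2
    have hqm : 0 < q ^ m := pow_pos hq.1 m
    refine ⟨(C + C / q ^ m) / (1 - q), fun x hx => ?_⟩
    have hx' := abs_pos.2 hx
    have h1 := hC x hx
    have h2 := hC (q * x) (mul_ne_zero hq.1.ne' hx)
    rw [abs_mul, abs_of_pos hq.1, mul_pow, mul_assoc, mul_comm (q ^ m), ← le_div_iff₀ hqm] at h2
    rw [_root_.qDeriv, abs_div, abs_mul, abs_of_pos h1q, le_div_iff₀ h1q]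
    calc |x| ^ (m + 1) * (|f x - f (q * x)| / ((1 - q) * |x|)) * (1 - q)
        = |x| ^ m * |f x - f (q * x)| := by rw [pow_succ]; field_simp
      _ ≤ |x| ^ m * (|f x| + |f (q * x)|) := by gcongr; exact abs_sub _ _
      _ ≤ _ := by rw [mul_add]; exact add_le_add h1 h2
  refine ⟨hf.near_zero_qDeriv hq, fun m => ?_⟩
  cases m with
  | zero => simpa using exists_bound_of_near_zero hq (hf.near_zero_qDeriv hq) (by simpa using hdec 0)
  | succ m => exact hdec m

lemma QSchwartz.iterate_qDeriv (hq : q ∈ Set.Ioo (0 : ℝ) 1) {f : ℝ → ℝ} (hf : QSchwartz q f)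
    (k : ℕ) : QSchwartz q ((_root_.qDeriv q)^[k] f) := by
  induction k with
  | zero => exact hf
  | succ k ih =>
    rw [Function.iterate_succ_apply']
    exact ih.qDeriv hq

lemma QSchwartz.qIntegrable_mul_pow (hq : q ∈ Set.Ioo (0 : ℝ) 1) (hγ : γ ∈ Set.Ioo (0 : ℝ) 1)
    {f : ℝ → ℝ} (hf : QSchwartz q f) (r : ℕ) : QIntegrable q γ fun x => f x * x ^ r := by
  obtain ⟨C, hC⟩ := hf.decay r
  obtain ⟨D, hD⟩ := hf.decay (r + 2)
  have hle : ∀ y : ℝ, 0 < y → |y * (f y * y ^ r + f (-y) * (-y) ^ r)| ≤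
      y * (|y| ^ r * |f y| + |-y| ^ r * |f (-y)|) := fun y hy => by
    rw [abs_mul, abs_of_pos hy]
    refine mul_le_mul_of_nonneg_left ((abs_add_le _ _).trans (le_of_eq ?_)) hy.le
    rw [abs_mul, abs_mul, abs_pow, abs_pow, abs_of_pos hy]
    ring
  refine summable_lattice (φ := fun y => y * (f y * y ^ r + f (-y) * (-y) ^ r))
    (C := 2 * C) (D := 2 * D) hq hγ (fun y hy => ?_) fun y hy => ?_
  · refine (hle y hy).trans ?_
    have h1 := hC y hy.ne'
    have h2 := hC (-y) (neg_ne_zero.2 hy.ne')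
    nlinarith
  · refine (mul_le_mul_of_nonneg_left (hle y hy) hy.le).trans ?_
    have h1 := hD y hy.ne'
    have h2 := hD (-y) (neg_ne_zero.2 hy.ne')
    rw [abs_neg] at h2 ⊢
    rw [abs_of_pos hy] at h1 h2 ⊢
    calc _ = y ^ (r + 2) * |f y| + y ^ (r + 2) * |f (-y)| := by ring
      _ ≤ _ := by linarith

lemma QSchwartz.exists_abs_sub_neg_le (hq : q ∈ Set.Ioo (0 : ℝ) 1) {f : ℝ → ℝ}
    (hf : QSchwartz q f) : ∃ C, ∀ y, 0 < y → |f y - f (-y)| ≤ C * y := by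
  obtain ⟨F, hF, hfF⟩ := hf.near_zero
  obtain ⟨B, hB⟩ := hf.decay 0
  obtain ⟨C, hC⟩ := (hF.differentiableAt.isBigO_sub).bound
  obtain ⟨δ, hδ, hball⟩ := Metric.mem_nhdsWithin_iff.1
    (hfF.and (hC.filter_mono nhdsWithin_le_nhds))
  refine ⟨max (2 * C) (2 * B / δ), fun y hy => ?_⟩
  have hy' : -y ≠ 0 := neg_ne_zero.2 hy.ne'
  rcases lt_or_ge y δ with hyδ | hyδ
  · obtain ⟨h1, h2⟩ := hball (a := y) ⟨by simpa [abs_of_pos hy] using hyδ, hy.ne'⟩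
    obtain ⟨h3, h4⟩ := hball (a := -y) ⟨by simpa [abs_of_pos hy] using hyδ, hy'⟩
    simp only [sub_zero, Real.norm_eq_abs, abs_neg, abs_of_pos hy] at h2 h4
    rw [h1, h3, qGauss_neg, ← mul_sub, abs_mul, abs_of_pos (qGauss_pos hq y)]
    have h5 : |F y - F (-y)| ≤ 2 * C * y := by
      have := abs_sub (F y - F 0) (F (-y) - F 0)
      rw [sub_sub_sub_cancel_right] at this
      linarith
    have h6 := mul_le_mul_of_nonneg_right (le_max_left (2 * C) (2 * B / δ)) hy.le
    nlinarith [qGauss_le_one hq y, abs_nonneg (F y - F (-y))]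
  · have h1 := hB y hy.ne'
    have h2 := hB (-y) hy'
    rw [pow_zero, one_mul] at h1 h2
    have h3 : 2 * B ≤ 2 * B / δ * y := by
      rw [div_mul_eq_mul_div, le_div_iff₀ hδ]
      nlinarith [abs_nonneg (f y)]
    have h6 := mul_le_mul_of_nonneg_right (le_max_right (2 * C) (2 * B / δ)) hy.le
    linarith [abs_sub (f y) (f (-y))]

lemma QSchwartz.qInt_qDeriv (hq : q ∈ Set.Ioo (0 : ℝ) 1) (hγ : γ ∈ Set.Ioo (0 : ℝ) 1)
    {f : ℝ → ℝ} (hf : QSchwartz q f) : qInt q γ (_root_.qDeriv q f) = 0 := by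
  obtain ⟨C, hC⟩ := hf.exists_abs_sub_neg_le hq
  obtain ⟨D, hD⟩ := hf.decay 1
  have hs : Summable fun k : ℤ => f (q ^ k * γ) - f (-(q ^ k * γ)) := by
    refine summable_lattice (φ := fun y => f y - f (-y)) (D := 2 * D) hq hγ hC fun y hy => ?_
    have h1 := hD y hy.ne'
    have h2 := hD (-y) (neg_ne_zero.2 hy.ne')
    rw [abs_neg] at h2
    rw [pow_one, abs_of_pos hy] at h1 h2
    have := mul_le_mul_of_nonneg_left (abs_sub (f y) (f (-y))) hy.le
    linarith
  have hs' := (Equiv.addRight (1 : ℤ)).summable_iff.2 hs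
  have hst := (Equiv.addRight (1 : ℤ)).tsum_eq fun k : ℤ => f (q ^ k * γ) - f (-(q ^ k * γ))
  have h1q : 1 - q ≠ 0 := (sub_pos.2 hq.2).ne'
  have hz := Summable.tsum_sub hs hs'
  simp only [Function.comp, hst, sub_self] at hz
  rw [qInt, ← tsum_mul_left, ← hz]
  congr 1
  funext k
  have hy : q ^ k * γ ≠ 0 := (mul_pos (zpow_pos hq.1 k) hγ.1).ne'
  simp only [Equiv.coe_addRight, lattice_succ hq, _root_.qDeriv]
  generalize q ^ k * γ = y at hy
  rw [mul_neg]
  field_simp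
  ring

lemma QSchwartz.qInt_qDeriv_mul_pow_succ (hq : q ∈ Set.Ioo (0 : ℝ) 1)
    (hγ : γ ∈ Set.Ioo (0 : ℝ) 1) {f : ℝ → ℝ} (hf : QSchwartz q f) (r : ℕ) :
    qInt q γ (fun x => _root_.qDeriv q f x * x ^ (r + 1)) =
      -((1 - q ^ (r + 1)) / (1 - q) / q ^ (r + 1)) * qInt q γ fun x => f x * x ^ r := by
  have h1q : 1 - q ≠ 0 := (sub_pos.2 hq.2).ne'
  have hq0 := hq.1.ne'
  have hi := hf.qIntegrable_mul_pow hq hγ r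
  have hi' : QIntegrable q γ fun x => f (q * x) * (q * x) ^ r := hi.comp_mul hq
  have key : ∀ x, x ≠ 0 → _root_.qDeriv q f x * x ^ (r + 1) =
      (1 - q)⁻¹ * (f x * x ^ r - (q ^ r)⁻¹ * (f (q * x) * (q * x) ^ r)) := fun x hx => by
    rw [_root_.qDeriv, mul_pow, pow_succ]
    field_simp
  rw [qInt_congr hq hγ key, qInt_const_mul, qInt_sub hi (hi'.const_mul _), qInt_const_mul,
    qInt_comp_mul hq fun x => f x * x ^ r]
  field_simp
  ring

lemma qMoment_zero (f : ℝ → ℝ) : qMoment q γ 0 f = qInt q γ f := by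
  simp [qMoment]

lemma QSchwartz.qMoment_succ_qDeriv (hq : q ∈ Set.Ioo (0 : ℝ) 1)
    (hγ : γ ∈ Set.Ioo (0 : ℝ) 1) {f : ℝ → ℝ} (hf : QSchwartz q f) (r : ℕ) :
    qMoment q γ (r + 1) (_root_.qDeriv q f) =
      -((1 - q ^ (r + 1)) / (1 - q)) * qMoment q γ r f := by
  have hexp : (r + 1) * (r + 1 + 1) / 2 = r * (r + 1) / 2 + (r + 1) := by
    rw [show (r + 1) * (r + 1 + 1) = r * (r + 1) + (r + 1) * 2 by ring,
      Nat.add_mul_div_right _ _ two_pos]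
  have hq0 := hq.1.ne'
  rw [qMoment, hf.qInt_qDeriv_mul_pow_succ hq hγ, qMoment, hexp, pow_add]
  field_simp

lemma qFact_succ (k : ℕ) : qFact q (k + 1) = (1 - q ^ (k + 1)) / (1 - q) * qFact q k := by
  simp only [qFact, qPoch, Finset.prod_range_succ, pow_succ]
  rw [mul_comm _ (1 - q * q ^ k), mul_comm ((1 - q) ^ k), mul_comm (q ^ k) q, mul_div_mul_comm]

lemma qPoch_pos {p a : ℝ} (hp : p ∈ Set.Ioo (0 : ℝ) 1) (ha : a ∈ Set.Ioo (0 : ℝ) 1) (k : ℕ) :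
    0 < qPoch p a k := by
  refine Finset.prod_pos fun j _ => sub_pos.2 ?_
  exact (mul_le_of_le_one_right ha.1.le (pow_le_one₀ hp.1.le hp.2.le)).trans_lt ha.2

lemma qFact_pos (hq : q ∈ Set.Ioo (0 : ℝ) 1) (k : ℕ) : 0 < qFact q k :=
  div_pos (qPoch_pos hq hq k) (pow_pos (sub_pos.2 hq.2) k)

/-- Moments of the iterated `q`-derivatives of a function with the moments of a delta function. -/
lemma QSchwartz.qMoment_iterate_qDeriv (hq : q ∈ Set.Ioo (0 : ℝ) 1)
    (hγ : γ ∈ Set.Ioo (0 : ℝ) 1) {u : ℝ → ℝ} (hu : QSchwartz q u)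
    (hmom : ∀ r, qMoment q γ r u = if r = 0 then 1 else 0) (k r : ℕ) :
    qMoment q γ r ((_root_.qDeriv q)^[k] u) = if r = k then (-1) ^ k * qFact q k else 0 := by
  induction k generalizing r with
  | zero => simp [hmom, qFact, qPoch]
  | succ k ih =>
    have hk := hu.iterate_qDeriv hq k
    rw [Function.iterate_succ_apply']
    cases r with
    | zero => rw [qMoment_zero, hk.qInt_qDeriv hq hγ, if_neg (Nat.succ_ne_zero k).symm]
    | succ r =>
      rw [hk.qMoment_succ_qDeriv hq hγ, ih]
      by_cases h : r = k
      · subst h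
        rw [if_pos rfl, if_pos rfl, qFact_succ]
        ring
      · rw [if_neg h, if_neg (by omega), mul_zero]

end Decay

section Series

open Filter Topology

variable {q γ : ℝ}

lemma summable_of_abs_succ_le (hq : q ∈ Set.Ioo (0 : ℝ) 1) {c : ℕ → ℝ} (K : ℝ)
    (h : ∀ r, |c (r + 1)| ≤ K * q ^ r * |c r|) : Summable c := by
  have ht : Tendsto (fun r : ℕ => K * q ^ r) atTop (𝓝 0) := by
    simpa using (tendsto_pow_atTop_nhds_zero_of_lt_one hq.1.le hq.2).const_mul K
  refine summable_of_ratio_norm_eventually_le (r := 1 / 2) (by norm_num) ?_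
  filter_upwards [ht.eventually_le_const (show (0 : ℝ) < 1 / 2 by norm_num)] with r hr
  exact (h r).trans (mul_le_mul_of_nonneg_right hr (abs_nonneg _))

lemma one_sub_le_one_sub_pow (hq : q ∈ Set.Ioo (0 : ℝ) 1) (n : ℕ) :
    1 - q ≤ 1 - q ^ (n + 1) :=
  sub_le_sub_left (pow_le_of_le_one hq.1.le hq.2.le n.succ_ne_zero) 1

/-- Coefficients of the series `₀φ₁(-; q³; q², -q³x²)`. -/
def gCoeff (q : ℝ) (r : ℕ) : ℝ :=
  (-1) ^ r * q ^ (2 * r ^ 2 + r) / (qPoch (q ^ 2) (q ^ 3) r * qPoch (q ^ 2) (q ^ 2) r)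

/-- The series `₀φ₁(-; q³; q², -q³x²)`. -/
def gSeries (q x : ℝ) : ℝ := ∑' r : ℕ, gCoeff q r * x ^ (2 * r)

lemma gOne_eq (x : ℝ) : gOne q x = qGauss q x * gSeries q x := by
  simp only [gOne, gSeries, gCoeff, div_mul_eq_mul_div]

lemma cube_mem_Ioo (hq : q ∈ Set.Ioo (0 : ℝ) 1) : q ^ 3 ∈ Set.Ioo (0 : ℝ) 1 :=
  ⟨pow_pos hq.1 3, pow_lt_one₀ hq.1.le hq.2 three_ne_zero⟩

lemma gCoeff_zero : gCoeff q 0 = 1 := by simp [gCoeff, qPoch]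

lemma gCoeff_ne_zero (hq : q ∈ Set.Ioo (0 : ℝ) 1) (r : ℕ) : gCoeff q r ≠ 0 := by
  have h1 := qPoch_pos (sq_mem_Ioo hq) (cube_mem_Ioo hq) r
  have h2 := qPoch_pos (sq_mem_Ioo hq) (sq_mem_Ioo hq) r
  have h3 := pow_pos hq.1 (2 * r ^ 2 + r)
  exact div_ne_zero (mul_ne_zero (pow_ne_zero _ (by norm_num)) h3.ne') (mul_pos h1 h2).ne'

lemma gCoeff_succ (hq : q ∈ Set.Ioo (0 : ℝ) 1) (r : ℕ) :
    gCoeff q (r + 1) =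
      -(q ^ (4 * r + 3) / ((1 - q ^ (2 * r + 2 + 1)) * (1 - q ^ (2 * r + 1 + 1)))) *
        gCoeff q r := by
  have h1 := (qPoch_pos (sq_mem_Ioo hq) (cube_mem_Ioo hq) r).ne'
  have h2 := (qPoch_pos (sq_mem_Ioo hq) (sq_mem_Ioo hq) r).ne'
  have h0 := sub_pos.2 hq.2
  have h3 := (h0.trans_le (one_sub_le_one_sub_pow hq (2 * r + 2))).ne'
  have h4 := (h0.trans_le (one_sub_le_one_sub_pow hq (2 * r + 1))).ne'
  have e1 : qPoch (q ^ 2) (q ^ 3) (r + 1) = qPoch (q ^ 2) (q ^ 3) r * (1 - q ^ (2 * r + 2 + 1)) := by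
    rw [qPoch, Finset.prod_range_succ, ← qPoch]
    ring
  have e2 : qPoch (q ^ 2) (q ^ 2) (r + 1) = qPoch (q ^ 2) (q ^ 2) r * (1 - q ^ (2 * r + 1 + 1)) := by
    rw [qPoch, Finset.prod_range_succ, ← qPoch]
    ring
  rw [gCoeff, gCoeff, e1, e2,
    show 2 * (r + 1) ^ 2 + (r + 1) = (2 * r ^ 2 + r) + (4 * r + 3) by ring, pow_add q, pow_succ]
  field_simp

lemma abs_gCoeff_succ_le (hq : q ∈ Set.Ioo (0 : ℝ) 1) (r : ℕ) :
    |gCoeff q (r + 1)| ≤ q ^ (4 * r) / (1 - q) ^ 2 * |gCoeff q r| := by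
  have h0 := sub_pos.2 hq.2
  have h3 := one_sub_le_one_sub_pow hq (2 * r + 2)
  have h4 := one_sub_le_one_sub_pow hq (2 * r + 1)
  have hd : (1 - q) ^ 2 ≤ (1 - q ^ (2 * r + 2 + 1)) * (1 - q ^ (2 * r + 1 + 1)) := by
    rw [sq]
    exact mul_le_mul h3 h4 h0.le (h0.le.trans h3)
  have hd0 : 0 < (1 - q) ^ 2 := pow_pos h0 2
  rw [gCoeff_succ hq, abs_mul, abs_neg, abs_of_nonneg
    (div_nonneg (pow_nonneg hq.1.le _) (hd0.le.trans hd))]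
  refine mul_le_mul_of_nonneg_right ?_ (abs_nonneg _)
  exact div_le_div₀ (pow_nonneg hq.1.le _)
    (pow_le_pow_of_le_one hq.1.le hq.2.le (by omega)) hd0 hd

lemma summable_gSeries (hq : q ∈ Set.Ioo (0 : ℝ) 1) (x : ℝ) :
    Summable fun r : ℕ => gCoeff q r * x ^ (2 * r) := by
  refine summable_of_abs_succ_le hq (x ^ 2 / (1 - q) ^ 2) fun r => ?_
  have h0 := sub_pos.2 hq.2
  rw [abs_mul, abs_mul, show 2 * (r + 1) = 2 * r + 2 by ring, pow_add x, abs_mul,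
    abs_of_nonneg (sq_nonneg x)]
  calc _ ≤ q ^ (4 * r) / (1 - q) ^ 2 * |gCoeff q r| * (|x ^ (2 * r)| * x ^ 2) :=
        mul_le_mul_of_nonneg_right (abs_gCoeff_succ_le hq r) (by positivity)
    _ ≤ q ^ r / (1 - q) ^ 2 * |gCoeff q r| * (|x ^ (2 * r)| * x ^ 2) := by
        have := pow_le_pow_of_le_one hq.1.le hq.2.le (show r ≤ 4 * r by omega)
        gcongr
    _ = _ := by ring

lemma summable_abs_gCoeff_mul (hq : q ∈ Set.Ioo (0 : ℝ) 1) (m : ℕ) :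
    Summable fun r : ℕ => |gCoeff q r| * (q ^ ((r + m) * (r + m - 1)))⁻¹ := by
  refine summable_of_abs_succ_le hq ((q ^ (2 * m))⁻¹ / (1 - q) ^ 2) fun r => ?_
  have h0 := sub_pos.2 hq.2
  have hq0 := hq.1
  have hexp : (r + 1 + m) * (r + 1 + m - 1) = (r + m) * (r + m - 1) + 2 * (r + m) := by
    rw [show r + 1 + m = r + m + 1 by ring, Nat.add_sub_cancel]
    cases r + m with
    | zero => rfl
    | succ n => rw [Nat.add_sub_cancel]; ring
  rw [abs_mul, abs_mul, abs_abs, abs_abs, abs_of_pos (inv_pos.2 (pow_pos hq0 _)),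
    abs_of_pos (inv_pos.2 (pow_pos hq0 _)), hexp, pow_add q]
  calc _ ≤ q ^ (4 * r) / (1 - q) ^ 2 * |gCoeff q r| *
          (q ^ ((r + m) * (r + m - 1)) * q ^ (2 * (r + m)))⁻¹ :=
        mul_le_mul_of_nonneg_right (abs_gCoeff_succ_le hq r) (by positivity)
    _ ≤ q ^ (r + 2 * r) / (1 - q) ^ 2 * |gCoeff q r| *
          (q ^ ((r + m) * (r + m - 1)) * q ^ (2 * (r + m)))⁻¹ := by
        have := pow_le_pow_of_le_one hq.1.le hq.2.le (show r + 2 * r ≤ 4 * r by omega)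
        gcongr
    _ = _ := by
        rw [mul_add, pow_add q (2 * r), pow_add q r]
        field_simp

lemma QSchwartz.of_even_decay {f : ℝ → ℝ}
    (h : ∃ F : ℝ → ℝ, AnalyticAt ℝ F 0 ∧ ∀ᶠ x in 𝓝[≠] 0, f x = qGauss q x * F x)
    (hd : ∀ m : ℕ, ∃ C, ∀ x, x ^ (2 * m) * |f x| ≤ C) : QSchwartz q f := by
  refine ⟨h, fun m => ?_⟩
  obtain ⟨C, hC⟩ := hd 0
  obtain ⟨D, hD⟩ := hd m
  refine ⟨C + D, fun x _ => ?_⟩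
  have h1 := hC x
  have h2 := hD x
  rw [mul_zero, pow_zero] at h1
  have h3 : |x| ^ m ≤ 1 + x ^ (2 * m) := by
    rw [mul_comm, pow_mul, ← sq_abs (x ^ m), abs_pow]
    nlinarith [sq_nonneg (|x| ^ m - 1)]
  nlinarith [abs_nonneg (f x)]

lemma qSchwartz_qGauss (hq : q ∈ Set.Ioo (0 : ℝ) 1) : QSchwartz q (qGauss q) := by
  refine .of_even_decay ⟨fun _ => 1, analyticAt_const, by simp⟩ fun m =>
    ⟨(q ^ (m * (m - 1)))⁻¹, fun x => ?_⟩
  rw [abs_of_pos (qGauss_pos hq x)]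
  exact pow_mul_qGauss_le hq m x

lemma analyticAt_gSeries (hq : q ∈ Set.Ioo (0 : ℝ) 1) : AnalyticAt ℝ (gSeries q) 0 := by
  have hrad : (FormalMultilinearSeries.ofScalars ℝ (gCoeff q)).radius = ⊤ := by
    refine FormalMultilinearSeries.ofScalars_radius_eq_top_of_tendsto ℝ _
      (Eventually.of_forall (gCoeff_ne_zero hq)) ?_
    have h4 : Tendsto (fun r : ℕ => q ^ (4 * r) / (1 - q) ^ 2) atTop (𝓝 0) := by
      have := (tendsto_pow_atTop_nhds_zero_of_lt_one (pow_nonneg hq.1.le 4)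
        (pow_lt_one₀ hq.1.le hq.2 four_ne_zero)).div_const ((1 - q) ^ 2)
      simpa only [pow_mul, zero_div] using this
    refine squeeze_zero (fun r => by positivity) (fun r => ?_) h4
    rw [div_le_iff₀ (norm_pos_iff.2 (gCoeff_ne_zero hq r))]
    exact abs_gCoeff_succ_le hq r
  have hp := (FormalMultilinearSeries.ofScalars ℝ (gCoeff q)).hasFPowerSeriesOnBall
    (by rw [hrad]; exact ENNReal.zero_lt_top)
  have ha : AnalyticAt ℝ (FormalMultilinearSeries.ofScalarsSum (gCoeff q) : ℝ → ℝ) 0 :=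
    ⟨_, hp.hasFPowerSeriesAt⟩
  have he : gSeries q = fun x => FormalMultilinearSeries.ofScalarsSum (gCoeff q) (x ^ 2) := by
    funext x
    simp only [gSeries, FormalMultilinearSeries.ofScalars_sum_eq, smul_eq_mul, pow_mul]
  rw [he]
  exact AnalyticAt.fun_comp (f := fun x : ℝ => x ^ 2) (by simpa using ha) (analyticAt_id.pow 2)

lemma qSchwartz_gOne (hq : q ∈ Set.Ioo (0 : ℝ) 1) : QSchwartz q (gOne q) := by
  refine .of_even_decay ⟨gSeries q, analyticAt_gSeries hq, Eventually.of_forall gOne_eq⟩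
    fun m => ⟨∑' r : ℕ, |gCoeff q r| * (q ^ ((r + m) * (r + m - 1)))⁻¹, fun x => ?_⟩
  have hx : 0 ≤ x ^ (2 * m) := by rw [pow_mul]; positivity
  rw [gOne_eq, ← abs_of_nonneg hx, ← abs_mul, ← mul_assoc, gSeries, ← tsum_mul_left,
    ← Real.norm_eq_abs]
  refine tsum_of_norm_bounded (summable_abs_gCoeff_mul hq m).hasSum fun r => ?_
  have h := pow_mul_qGauss_le hq (r + m) x
  rw [Real.norm_eq_abs]
  calc |x ^ (2 * m) * qGauss q x * (gCoeff q r * x ^ (2 * r))|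
      = |gCoeff q r| * |x ^ (2 * (r + m)) * qGauss q x| := by
        rw [← abs_mul]
        congr 1
        ring
    _ ≤ _ := by
        refine mul_le_mul_of_nonneg_left ?_ (abs_nonneg _)
        rwa [abs_of_nonneg]
        refine mul_nonneg ?_ (qGauss_pos hq x).le
        rw [pow_mul]
        positivity

lemma gSeries_functional (hq : q ∈ Set.Ioo (0 : ℝ) 1) (x : ℝ) :
    gSeries q x - (1 + q) * gSeries q (q * x) + q * gSeries q (q * (q * x)) =
      -(q ^ 3 * x ^ 2 * gSeries q (q * (q * x))) := by
  have h0 := summable_gSeries hq x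
  have h1 := (summable_gSeries hq (q * x)).mul_left (1 + q)
  have h2 := (summable_gSeries hq (q * (q * x))).mul_left q
  simp only [gSeries]
  rw [← tsum_mul_left, ← tsum_mul_left, ← tsum_mul_left, ← h0.tsum_sub h1,
    ← (h0.sub h1).tsum_add h2, ((h0.sub h1).add h2).tsum_eq_zero_add, ← tsum_neg]
  have hz : gCoeff q 0 * x ^ (2 * 0) - (1 + q) * (gCoeff q 0 * (q * x) ^ (2 * 0)) +
      q * (gCoeff q 0 * (q * (q * x)) ^ (2 * 0)) = 0 := by
    simp only [mul_zero, pow_zero]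
    ring
  rw [hz, zero_add]
  congr 1
  funext r
  have hp := sub_pos.2 hq.2
  have h3 := (hp.trans_le (one_sub_le_one_sub_pow hq (2 * r + 2))).ne'
  have h4 := (hp.trans_le (one_sub_le_one_sub_pow hq (2 * r + 1))).ne'
  calc _ = gCoeff q (r + 1) * x ^ (2 * r + 2) *
        ((1 - q ^ (2 * r + 2 + 1)) * (1 - q ^ (2 * r + 1 + 1))) := by ring
    _ = _ := by
      rw [gCoeff_succ hq]
      field_simp
      ring

lemma gOne_functional (hq : q ∈ Set.Ioo (0 : ℝ) 1) (x : ℝ) :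
    x ^ 2 * gOne q x = (1 + q) * gOne q (q * x) - q * gOne q (q * (q * x)) - gOne q x := by
  have h := gSeries_functional hq x
  simp only [gOne_eq, qGauss_mul hq]
  linear_combination (qGauss q x * (1 + x ^ 2)) * h

lemma gOne_neg (x : ℝ) : gOne q (-x) = gOne q x := by
  simp only [gOne_eq, gSeries, qGauss_neg, pow_mul, neg_sq]

lemma qInt_gOne_mul_pow_add_two (hq : q ∈ Set.Ioo (0 : ℝ) 1) (hγ : γ ∈ Set.Ioo (0 : ℝ) 1)
    (n : ℕ) : qInt q γ (fun x => gOne q x * x ^ (n + 2)) =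
      -((1 - (q ^ n)⁻¹) * (1 - (q ^ (n + 1))⁻¹)) * qInt q γ fun x => gOne q x * x ^ n := by
  have hq0 := hq.1.ne'
  set φ : ℝ → ℝ := fun x => gOne q x * x ^ n with hφ
  have hi : QIntegrable q γ φ := (qSchwartz_gOne hq).qIntegrable_mul_pow hq hγ n
  have hi1 : QIntegrable q γ fun x => φ (q * x) := hi.comp_mul hq
  have hi2 : QIntegrable q γ fun x => φ (q * (q * x)) := hi1.comp_mul hq
  have key : (fun x => gOne q x * x ^ (n + 2)) = fun x =>
      (1 + q) * (q ^ n)⁻¹ * φ (q * x) - q * (q ^ n * q ^ n)⁻¹ * φ (q * (q * x)) - φ x := by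
    funext x
    have h := gOne_functional hq x
    simp only [hφ, mul_pow]
    generalize gOne q (q * (q * x)) = w at h ⊢
    field_simp
    linear_combination x ^ n * h
  have hc2 : qInt q γ (fun x => φ (q * (q * x))) = q⁻¹ * (q⁻¹ * qInt q γ φ) := by
    rw [qInt_comp_mul hq fun x => φ (q * x), qInt_comp_mul hq]
  rw [key, qInt_sub ((hi1.const_mul _).sub (hi2.const_mul _)) hi,
    qInt_sub (hi1.const_mul _) (hi2.const_mul _), qInt_const_mul, qInt_const_mul, hc2,
    qInt_comp_mul hq]
  field_simp
  ring

lemma qInt_gOne_mul_pow_succ (hq : q ∈ Set.Ioo (0 : ℝ) 1) (hγ : γ ∈ Set.Ioo (0 : ℝ) 1)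
    (n : ℕ) : qInt q γ (fun x => gOne q x * x ^ (n + 1)) = 0 := by
  induction n using Nat.twoStepInduction with
  | zero => exact qInt_eq_zero_of_odd fun x => by rw [gOne_neg]; ring
  | one => simp [qInt_gOne_mul_pow_add_two hq hγ 0]
  | more n ih _ => rw [qInt_gOne_mul_pow_add_two hq hγ (n + 1), ih, mul_zero]

end Series

section Normalization

open Filter Topology

variable {q γ : ℝ}

lemma tendsto_tsum_mul_pow_pow {p : ℝ} (hp : p ∈ Set.Ioo (0 : ℝ) 1) {c : ℕ → ℝ}
    (hc : Summable c) : Tendsto (fun n : ℕ => ∑' r : ℕ, c r * (p ^ n) ^ r) atTop (𝓝 (c 0)) := by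
  have hlim : ∀ r : ℕ, Tendsto (fun n : ℕ => c r * (p ^ n) ^ r) atTop
      (𝓝 (if r = 0 then c 0 else 0)) := by
    intro r
    rcases eq_or_ne r 0 with rfl | hr
    · simp
    · have := (((tendsto_pow_atTop_nhds_zero_of_lt_one hp.1.le hp.2).pow r).const_mul (c r))
      simpa [hr] using this
  have h := tendsto_tsum_of_dominated_convergence hc.abs hlim
    (Eventually.of_forall fun n r => ?_)
  · simpa using h
  · rw [Real.norm_eq_abs, abs_mul, abs_of_nonneg (pow_nonneg (pow_nonneg hp.1.le _) _)]
    exact mul_le_of_le_one_right (abs_nonneg _)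
      (pow_le_one₀ (pow_nonneg hp.1.le _) (pow_le_one₀ hp.1.le hp.2.le))

lemma pos_of_eventually_pos {s : ℕ → ℝ} (hs : ∀ᶠ n in atTop, 0 < s n)
    (hstep : ∀ n, 0 < s (n + 1) → 0 < s n) (n : ℕ) : 0 < s n := by
  obtain ⟨N, hN⟩ := eventually_atTop.1 hs
  refine Nat.decreasingInduction' (fun k _ _ hk => hstep k hk) (Nat.le_max_right N n)
    (hN _ (Nat.le_max_left N n))

/-- Coefficients of Euler's expansion of `(q² z; q²)_∞`. -/
def eulerCoeff (q : ℝ) (r : ℕ) : ℝ := (-1) ^ r * q ^ (r ^ 2 + r) / qPoch (q ^ 2) (q ^ 2) r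

lemma eulerCoeff_zero : eulerCoeff q 0 = 1 := by simp [eulerCoeff, qPoch]

lemma eulerCoeff_succ_mul (hq : q ∈ Set.Ioo (0 : ℝ) 1) (r : ℕ) :
    eulerCoeff q (r + 1) * (1 - q ^ (2 * r + 1 + 1)) = -q ^ (2 * r + 2) * eulerCoeff q r := by
  have h2 := (qPoch_pos (sq_mem_Ioo hq) (sq_mem_Ioo hq) r).ne'
  have h4 := ((sub_pos.2 hq.2).trans_le (one_sub_le_one_sub_pow hq (2 * r + 1))).ne'
  have e2 : qPoch (q ^ 2) (q ^ 2) (r + 1) =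
      qPoch (q ^ 2) (q ^ 2) r * (1 - q ^ (2 * r + 1 + 1)) := by
    rw [qPoch, Finset.prod_range_succ, ← qPoch]
    ring
  rw [eulerCoeff, eulerCoeff, e2]
  field_simp
  ring

lemma summable_eulerCoeff (hq : q ∈ Set.Ioo (0 : ℝ) 1) : Summable (eulerCoeff q) := by
  refine summable_of_abs_succ_le hq (1 - q)⁻¹ fun r => ?_
  have h0 := sub_pos.2 hq.2
  have h4 := one_sub_le_one_sub_pow hq (2 * r + 1)
  have h := congrArg abs (eulerCoeff_succ_mul hq r)
  rw [abs_mul, abs_mul, abs_neg, abs_of_pos (h0.trans_le h4), abs_of_pos (pow_pos hq.1 _)] at h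
  have h5 := pow_le_pow_of_le_one hq.1.le hq.2.le (show r ≤ 2 * r + 2 by omega)
  rw [mul_assoc, inv_mul_eq_div, le_div_iff₀ h0]
  calc _ ≤ |eulerCoeff q (r + 1)| * (1 - q ^ (2 * r + 1 + 1)) := by gcongr
    _ = _ := h
    _ ≤ _ := by gcongr

lemma Summable.mul_pow_pow {p : ℝ} (hp : p ∈ Set.Ioo (0 : ℝ) 1) {c : ℕ → ℝ}
    (hc : Summable c) (n : ℕ) : Summable fun r : ℕ => c r * (p ^ n) ^ r := by
  refine Summable.of_norm_bounded hc.abs fun r => ?_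
  rw [Real.norm_eq_abs, abs_mul, abs_of_nonneg (pow_nonneg (pow_nonneg hp.1.le _) _)]
  exact mul_le_of_le_one_right (abs_nonneg _)
    (pow_le_one₀ (pow_nonneg hp.1.le _) (pow_le_one₀ hp.1.le hp.2.le))

lemma tsum_eulerCoeff_pos (hq : q ∈ Set.Ioo (0 : ℝ) 1) (n : ℕ) :
    0 < ∑' r : ℕ, eulerCoeff q r * ((q ^ 2) ^ n) ^ r := by
  have hp := sq_mem_Ioo hq
  have hs := summable_eulerCoeff hq
  have ht := tendsto_tsum_mul_pow_pow hp hs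
  rw [eulerCoeff_zero] at ht
  refine pos_of_eventually_pos (s := fun n => ∑' r : ℕ, eulerCoeff q r * ((q ^ 2) ^ n) ^ r)
    (ht.eventually_const_lt one_pos) (fun n hn => ?_) n
  have h1 := hs.mul_pow_pow hp n
  have h2 := hs.mul_pow_pow hp (n + 1)
  have hdiff : ∑' r : ℕ, eulerCoeff q r * ((q ^ 2) ^ n) ^ r -
      ∑' r : ℕ, eulerCoeff q r * ((q ^ 2) ^ (n + 1)) ^ r =
      -q ^ (2 * n + 1 + 1) * ∑' r : ℕ, eulerCoeff q r * ((q ^ 2) ^ (n + 1)) ^ r := by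
    rw [← h1.tsum_sub h2, (h1.sub h2).tsum_eq_zero_add, ← tsum_mul_left]
    simp only [pow_zero, sub_self, zero_add]
    congr 1
    funext r
    linear_combination ((q ^ 2) ^ n) ^ (r + 1) * eulerCoeff_succ_mul hq r
  have hmul : ∑' r : ℕ, eulerCoeff q r * ((q ^ 2) ^ n) ^ r =
      (1 - q ^ (2 * n + 1 + 1)) * ∑' r : ℕ, eulerCoeff q r * ((q ^ 2) ^ (n + 1)) ^ r := by
    linear_combination hdiff
  rw [hmul]
  exact mul_pos ((sub_pos.2 hq.2).trans_le (one_sub_le_one_sub_pow hq (2 * n + 1))) hn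

lemma summable_eulerCoeff_div (hq : q ∈ Set.Ioo (0 : ℝ) 1) :
    Summable fun r : ℕ => eulerCoeff q r / (1 - q ^ (2 * r + 1)) := by
  refine Summable.of_norm_bounded ((summable_eulerCoeff hq).abs.mul_left (1 - q)⁻¹) fun r => ?_
  have h0 := sub_pos.2 hq.2
  have h4 := one_sub_le_one_sub_pow hq (2 * r)
  rw [Real.norm_eq_abs, abs_div, abs_of_pos (h0.trans_le h4), inv_mul_eq_div]
  gcongr

lemma tsum_eulerCoeff_div_pos (hq : q ∈ Set.Ioo (0 : ℝ) 1) :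
    0 < ∑' r : ℕ, eulerCoeff q r / (1 - q ^ (2 * r + 1)) := by
  have hp := sq_mem_Ioo hq
  have hs := summable_eulerCoeff_div hq
  have ht := tendsto_tsum_mul_pow_pow hp hs
  have h0 := sub_pos.2 hq.2
  have hlim : 0 < eulerCoeff q 0 / (1 - q ^ (2 * 0 + 1)) := by
    rw [eulerCoeff_zero]
    simpa using hq.2
  have h := pos_of_eventually_pos
    (s := fun n => ∑' r : ℕ, eulerCoeff q r / (1 - q ^ (2 * r + 1)) * ((q ^ 2) ^ n) ^ r)
    (ht.eventually_const_lt hlim) (fun n hn => ?_) 0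
  · simpa using h
  · have h1 := hs.mul_pow_pow hp n
    have h2 := (hs.mul_pow_pow hp (n + 1)).mul_left q
    have key : ∑' r : ℕ, eulerCoeff q r / (1 - q ^ (2 * r + 1)) * ((q ^ 2) ^ n) ^ r -
        q * ∑' r : ℕ, eulerCoeff q r / (1 - q ^ (2 * r + 1)) * ((q ^ 2) ^ (n + 1)) ^ r =
        ∑' r : ℕ, eulerCoeff q r * ((q ^ 2) ^ n) ^ r := by
      rw [← tsum_mul_left, ← h1.tsum_sub h2]
      congr 1
      funext r
      have h4 := (h0.trans_le (one_sub_le_one_sub_pow hq (2 * r))).ne'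
      rw [pow_succ (q ^ 2) n, mul_pow _ (q ^ 2) r]
      field_simp
      ring
    have hE := tsum_eulerCoeff_pos hq n
    have := mul_pos hq.1 hn
    linarith

lemma qInt_qGauss_pos (hq : q ∈ Set.Ioo (0 : ℝ) 1) (hγ : γ ∈ Set.Ioo (0 : ℝ) 1) :
    0 < qInt q γ (qGauss q) := by
  have hs : QIntegrable q γ (qGauss q) := by
    simpa using (qSchwartz_qGauss hq).qIntegrable_mul_pow hq hγ 0
  have hpos : ∀ k : ℤ, 0 < q ^ k * γ * (qGauss q (q ^ k * γ) + qGauss q (-(q ^ k * γ))) :=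
    fun k => mul_pos (mul_pos (zpow_pos hq.1 k) hγ.1)
      (add_pos (qGauss_pos hq _) (qGauss_pos hq _))
  exact mul_pos (sub_pos.2 hq.2) (Summable.tsum_pos hs (fun k => (hpos k).le) 0 (hpos 0))

lemma qInt_qGauss_mul_pow_succ (hq : q ∈ Set.Ioo (0 : ℝ) 1) (hγ : γ ∈ Set.Ioo (0 : ℝ) 1)
    (r : ℕ) : qInt q γ (fun x => qGauss q x * x ^ (2 * (r + 1))) =
      (1 - q ^ (2 * r + 1)) / q ^ (2 * r + 1) * qInt q γ fun x => qGauss q x * x ^ (2 * r) := by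
  have hq0 := hq.1.ne'
  set φ : ℝ → ℝ := fun x => qGauss q x * x ^ (2 * r) with hφ
  have hi : QIntegrable q γ φ := (qSchwartz_qGauss hq).qIntegrable_mul_pow hq hγ _
  have hi1 : QIntegrable q γ fun x => φ (q * x) := hi.comp_mul hq
  have key : (fun x => qGauss q x * x ^ (2 * (r + 1))) = fun x =>
      (q ^ (2 * r))⁻¹ * φ (q * x) - φ x := by
    funext x
    simp only [hφ, mul_pow, qGauss_mul hq]
    field_simp
    ring
  rw [key, qInt_sub (hi1.const_mul _) hi, qInt_const_mul, qInt_comp_mul hq]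
  field_simp
  ring

lemma gCoeff_mul_qInt (hq : q ∈ Set.Ioo (0 : ℝ) 1) (hγ : γ ∈ Set.Ioo (0 : ℝ) 1) (r : ℕ) :
    gCoeff q r * qInt q γ (fun x => qGauss q x * x ^ (2 * r)) =
      (1 - q) * qInt q γ (qGauss q) * (eulerCoeff q r / (1 - q ^ (2 * r + 1))) := by
  have hp := sub_pos.2 hq.2
  have hq0 := hq.1.ne'
  induction r with
  | zero =>
    simp only [gCoeff_zero, eulerCoeff_zero, mul_zero, pow_zero, mul_one, zero_add, pow_one]
    field_simp
  | succ r ih =>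
    have h3 := (hp.trans_le (one_sub_le_one_sub_pow hq (2 * r + 2))).ne'
    have h4 := (hp.trans_le (one_sub_le_one_sub_pow hq (2 * r + 1))).ne'
    have h5 := (hp.trans_le (one_sub_le_one_sub_pow hq (2 * r))).ne'
    have he := eulerCoeff_succ_mul hq r
    rw [← eq_div_iff h4] at he
    have e1 : q ^ (4 * r + 3) = q ^ (2 * r + 1) * q ^ (2 * r + 2) := by ring
    rw [gCoeff_succ hq, qInt_qGauss_mul_pow_succ hq hγ, he, e1]
    calc _ = -(q ^ (2 * r + 2) * (1 - q ^ (2 * r + 1)) /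
          ((1 - q ^ (2 * r + 2 + 1)) * (1 - q ^ (2 * r + 1 + 1)))) *
          (gCoeff q r * qInt q γ fun x => qGauss q x * x ^ (2 * r)) := by
          have := pow_ne_zero (2 * r + 1) hq0
          field_simp
      _ = _ := by
          rw [ih, show 2 * (r + 1) + 1 = 2 * r + 2 + 1 by ring]
          field_simp

lemma qInt_gOne_pos (hq : q ∈ Set.Ioo (0 : ℝ) 1) (hγ : γ ∈ Set.Ioo (0 : ℝ) 1) :
    0 < qInt q γ (gOne q) := by
  have hp := sub_pos.2 hq.2
  set w : ℕ → ℤ → ℝ := fun r k => q ^ k * γ * (qGauss q (q ^ k * γ) * (q ^ k * γ) ^ (2 * r) +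
    qGauss q (-(q ^ k * γ)) * (-(q ^ k * γ)) ^ (2 * r)) with hw
  have hw0 : ∀ r k, 0 ≤ w r k := fun r k => by
    have h1 := mul_pos (zpow_pos hq.1 k) hγ.1
    have h2 := qGauss_pos hq (q ^ k * γ)
    have h3 := qGauss_pos hq (-(q ^ k * γ))
    simp only [hw, pow_mul]
    positivity
  have hws : ∀ r, Summable (w r) := fun r =>
    (qSchwartz_qGauss hq).qIntegrable_mul_pow hq hγ (2 * r)
  have hterm : ∀ r, gCoeff q r * ∑' k, w r k =
      qInt q γ (qGauss q) * (eulerCoeff q r / (1 - q ^ (2 * r + 1))) := fun r => by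
    have h := gCoeff_mul_qInt hq hγ r
    have e : qInt q γ (fun x => qGauss q x * x ^ (2 * r)) = (1 - q) * ∑' k, w r k := rfl
    rw [e] at h
    refine mul_left_cancel₀ hp.ne' ?_
    linear_combination h
  have hprod : Summable (Function.uncurry fun (r : ℕ) (k : ℤ) => gCoeff q r * w r k) := by
    rw [← summable_abs_iff, summable_prod_of_nonneg fun _ => abs_nonneg _]
    simp only [Function.uncurry, abs_mul, abs_of_nonneg (hw0 _ _), tsum_mul_left]
    refine ⟨fun r => (hws r).mul_left _, ?_⟩
    refine ((summable_eulerCoeff_div hq).mul_left (qInt q γ (qGauss q))).abs.congr fun r => ?_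
    rw [← hterm, abs_mul, abs_of_nonneg (tsum_nonneg (hw0 r))]
  have hswap : qInt q γ (gOne q) = (1 - q) * ∑' r, ∑' k, gCoeff q r * w r k := by
    rw [← hprod.tsum_comm, qInt]
    congr 2
    funext k
    simp only [gOne_eq, gSeries]
    rw [← tsum_mul_left, ← tsum_mul_left, ← Summable.tsum_add
      ((summable_gSeries hq _).mul_left _) ((summable_gSeries hq _).mul_left _), ← tsum_mul_left]
    congr 1
    funext r
    simp only [hw]
    ring
  simp only [tsum_mul_left, hterm] at hswap
  rw [hswap]
  exact mul_pos hp (mul_pos (qInt_qGauss_pos hq hγ) (tsum_eulerCoeff_div_pos hq))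

lemma uGamma_eq : uGamma q γ = fun x => (qInt q γ (gOne q))⁻¹ * gOne q x := by
  funext x
  rw [uGamma, div_eq_inv_mul]

lemma qSchwartz_uGamma (hq : q ∈ Set.Ioo (0 : ℝ) 1) : QSchwartz q (uGamma q γ) := by
  rw [uGamma_eq]
  exact (qSchwartz_gOne hq).const_mul _

lemma qMoment_const_mul (c : ℝ) (f : ℝ → ℝ) (r : ℕ) :
    qMoment q γ r (fun x => c * f x) = c * qMoment q γ r f := by
  simp only [qMoment, mul_assoc, qInt_const_mul]
  ring

lemma qMoment_uGamma (hq : q ∈ Set.Ioo (0 : ℝ) 1) (hγ : γ ∈ Set.Ioo (0 : ℝ) 1) (r : ℕ) :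
    qMoment q γ r (uGamma q γ) = if r = 0 then 1 else 0 := by
  rw [uGamma_eq, qMoment_const_mul]
  cases r with
  | zero => rw [qMoment_zero, if_pos rfl, inv_mul_cancel₀ (qInt_gOne_pos hq hγ).ne']
  | succ r =>
    rw [qMoment, qInt_gOne_mul_pow_succ hq hγ, mul_zero, mul_zero, if_neg r.succ_ne_zero]

end Normalization

section DualBasis

variable {q γ : ℝ}

lemma Gk_eq (k : ℕ) :
    Gk q γ k = fun x => (-1) ^ k / qFact q k * (qDeriv q)^[k] (uGamma q γ) x := by
  funext x
  rw [Gk, div_mul_eq_mul_div]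

lemma qMoment_Gk (hq : q ∈ Set.Ioo (0 : ℝ) 1) (hγ : γ ∈ Set.Ioo (0 : ℝ) 1) (r k : ℕ) :
    qMoment q γ r (Gk q γ k) = if r = k then 1 else 0 := by
  rw [Gk_eq, qMoment_const_mul,
    (qSchwartz_uGamma hq).qMoment_iterate_qDeriv hq hγ (qMoment_uGamma hq hγ)]
  split_ifs
  · have := (qFact_pos hq k).ne'
    field_simp
    rw [← pow_mul, mul_comm, pow_mul]
    simp
  · exact mul_zero _

lemma iterate_qDeriv_const_mul (c : ℝ) (f : ℝ → ℝ) (k : ℕ) :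
    (qDeriv q)^[k] (fun x => c * f x) = fun x => c * (qDeriv q)^[k] f x := by
  induction k with
  | zero => rfl
  | succ k ih =>
    rw [Function.iterate_succ_apply', Function.iterate_succ_apply', ih]
    funext x
    simp only [qDeriv]
    ring

lemma qConv_Gk (hq : q ∈ Set.Ioo (0 : ℝ) 1) (hγ : γ ∈ Set.Ioo (0 : ℝ) 1) (k : ℕ)
    (f : ℝ → ℝ) (x : ℝ) :
    qConv q γ (Gk q γ k) f x = (-1) ^ k / qFact q k * (qDeriv q)^[k] f x := by
  rw [qConv, tsum_eq_single k fun e he => by rw [qMoment_Gk hq hγ, if_neg he]; ring,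
    qMoment_Gk hq hγ, if_pos rfl, mul_one]

lemma qBinom_add_div_qFact (hq : q ∈ Set.Ioo (0 : ℝ) 1) (k l : ℕ) :
    qBinom q (k + l) l / qFact q (k + l) = (qFact q k * qFact q l)⁻¹ := by
  have h1 := (qPoch_pos hq hq k).ne'
  have h2 := (qPoch_pos hq hq l).ne'
  have h3 := (qPoch_pos hq hq (k + l)).ne'
  have h4 := (sub_pos.2 hq.2).ne'
  rw [qBinom, Nat.add_sub_cancel, qFact, qFact, qFact, pow_add]
  field_simp

end DualBasis

/-- The basis dual to monomials. -/
theorem stmt17 (q γ : ℝ) (hq : q ∈ Set.Ioo (0 : ℝ) 1) (hγ : γ ∈ Set.Ioo (0 : ℝ) 1) :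
    (∀ r k : ℕ, qMoment q γ r (Gk q γ k) = if r = k then 1 else 0) ∧
    (∀ k l : ℕ, qInt q γ (fun x => Gk q γ k x * x ^ l) =
      if k = l then (q ^ (k * (k + 1) / 2))⁻¹ else 0) ∧
    (∀ k l : ℕ, ∀ x : ℝ, x ≠ 0 →
      qConv q γ (Gk q γ k) (Gk q γ l) x = qBinom q (k + l) l * Gk q γ (k + l) x) := by
  have hG := qMoment_Gk hq hγ
  refine ⟨hG, fun k l => ?_, fun k l x _ => ?_⟩
  · have hl := pow_pos hq.1 (l * (l + 1) / 2)
    have h := hG l k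
    rw [qMoment, ← eq_inv_mul_iff_mul_eq₀ hl.ne'] at h
    rw [h]
    by_cases hkl : k = l
    · subst hkl
      rw [if_pos rfl, if_pos rfl, mul_one]
    · rw [if_neg hkl, if_neg (Ne.symm hkl), mul_zero]
  · have hb := qBinom_add_div_qFact hq k l
    rw [qConv_Gk hq hγ, Gk_eq l, iterate_qDeriv_const_mul, ← Function.iterate_add_apply, Gk]
    rw [mul_inv] at hb
    linear_combination (-(-1) ^ (k + l) * (qDeriv q)^[k + l] (uGamma q γ) x) * hb
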